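/- arXiv:2503.16393 — 2 statements merged into one kernel-verified Lean document; each statement's English description precedes it below -/
import Mathlib

section
/- Let R be a regular domain with a generalized regular system of parameters x = x_1,…,x_p, and let p = (x_1,…,x_p). Let f ∈ R and let h·f = Σ_{i=1}^t r_i·m_i be a monomial representation of f (with m_1,…,m_t monomials in x and h, r_1,…,r_t ∈ R ∖ p) such that m_i ∤ m_k for all i ≠ k. Then the set of monomials {m_1,…,m_t} is uniquely determined by f; i.e., any two such minimal monomial representations of f involve the same set of monomials. -/
open Ideal Set Pointwise

noncomputable section

namespace NND

variable {R : Type*} [CommRing R] {p : ℕ}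

/-- The monomial `x^a = x 0 ^ a 0 * ⋯` in the elements `x`. -/
def mono (x : Fin p → R) (a : Fin p → ℕ) : R := ∏ i, x i ^ a i

/-- A (commutative) ring is regular local if it is Noetherian local and its maximal ideal
can be generated by `dim R` elements. -/
def IsRegularLocal (A : Type*) [CommRing A] : Prop :=
  IsNoetherianRing A ∧ ∃ h : IsLocalRing A, ∃ s : Finset A,
    Ideal.span (s : Set A) = @IsLocalRing.maximalIdeal A _ h ∧
    (s.card : WithBot (WithTop ℕ)) = ringKrullDim A

/-- A regular domain: an integral domain whose localization at every prime is regular local. -/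
def IsRegularDomain (A : Type*) [CommRing A] : Prop :=
  IsDomain A ∧ ∀ (P : Ideal A) (hP : P.IsPrime), IsRegularLocal (@Localization.AtPrime A _ P hP)

/-- `x` is a regular sequence. -/
def IsRegSeq (x : Fin p → R) : Prop :=
  Ideal.span (Set.range x) ≠ ⊤ ∧
  ∀ i : Fin p, ∀ r : R, r * x i ∈ Ideal.span (x '' {j | j < i}) →
    r ∈ Ideal.span (x '' {j | j < i})

/-- A generalized regular system of parameters: a permutable regular sequence all of whose
subquotients are regular domains. -/
def IsGRSOP (x : Fin p → R) : Prop :=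
  (∀ σ : Equiv.Perm (Fin p), IsRegSeq (x ∘ σ)) ∧
  ∀ S : Set (Fin p), IsRegularDomain (R ⧸ Ideal.span (x '' S))

/-- `A` is the exponent set of a monomial representation of `f`:
`h * f = ∑_{a ∈ A} r a * x^a` with `h` and the `r a` outside `(x_1, …, x_p)`. -/
def IsMonRep (x : Fin p → R) (f : R) (A : Finset (Fin p → ℕ)) : Prop :=
  ∃ (h : R) (r : (Fin p → ℕ) → R),
    h ∉ Ideal.span (Set.range x) ∧ (∀ a ∈ A, r a ∉ Ideal.span (Set.range x)) ∧
    h * f = ∑ a ∈ A, r a * mono x a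

/-- A minimal (irredundant) monomial representation: no monomial divides another. -/
def IsMinMonRep (x : Fin p → R) (f : R) (A : Finset (Fin p → ℕ)) : Prop :=
  IsMonRep x f A ∧ ∀ a ∈ A, ∀ b ∈ A, a ≠ b → ¬ mono x a ∣ mono x b

open Classical in
/-- The support of `f`: the exponent set of its (unique) minimal monomial representation. -/
def supp (x : Fin p → R) (f : R) : Set (Fin p → ℕ) :=
  if h : ∃ A : Finset (Fin p → ℕ), IsMinMonRep x f A then ↑h.choose else ∅

/-- Embedding of exponent vectors into `ℝ^p`. -/
def toR (a : Fin p → ℕ) : Fin p → ℝ := fun i => (a i : ℝ)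

/-- The Newton polyhedron of a set of ring elements. -/
def Γ (x : Fin p → R) (S : Set R) : Set (Fin p → ℝ) :=
  convexHull ℝ (toR '' ⋃ f ∈ S, supp x f)

/-- The Newton polyhedron `Γ_x(I)` of an ideal. -/
def ΓI (x : Fin p → R) (I : Ideal R) : Set (Fin p → ℝ) := Γ x (I : Set R)

/-- The Newton polyhedron `Γ_x(f)` of an element: that of the principal ideal `(f)`. -/
def ΓE (x : Fin p → R) (f : R) : Set (Fin p → ℝ) := ΓI x (Ideal.span {f})

/-- The integral closure of an ideal `I`: elements satisfying an equation of integral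
dependence `f^n + a_1 f^{n-1} + ⋯ + a_n = 0` with `a_i ∈ I^i`. -/
def intClosure (I : Ideal R) : Set R :=
  {f | ∃ n : ℕ, 0 < n ∧ ∃ a : ℕ → R, (∀ i ∈ Finset.Icc 1 n, a i ∈ I ^ i) ∧
    f ^ n + ∑ i ∈ Finset.Icc 1 n, a i * f ^ (n - i) = 0}

/-- The monomial ideal `I_0` spanned by the lattice points of `Γ_x(I)`. -/
def idealZero (x : Fin p → R) (I : Ideal R) : Ideal R :=
  Ideal.span (mono x '' {a | toR a ∈ ΓI x I})

/-- The ideal `K_I` generated by the monomials lying in the integral closure of `I`. -/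
def KIdeal (x : Fin p → R) (I : Ideal R) : Ideal R :=
  Ideal.span {m | (∃ a : Fin p → ℕ, m = mono x a) ∧ m ∈ intClosure I}

/-- `y` is a nonzerodivisor modulo `K`. -/
def NZ (y : R) (K : Ideal R) : Prop := ∀ r, r * y ∈ K → r ∈ K

lemma NZ.pow {y : R} {K : Ideal R} (h : NZ y K) (n : ℕ) : NZ (y ^ n) K := by
  induction n with
  | zero => intro r hr; simpa using hr
  | succ n ih =>
    intro r hr
    apply ih
    apply h
    rwa [mul_assoc, ← pow_succ]

lemma mem_sup_span {K : Ideal R} {y u : R} :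
    u ∈ K ⊔ Ideal.span {y} ↔ ∃ v, u - v * y ∈ K := by
  rw [Submodule.mem_sup]
  constructor
  · rintro ⟨k, hk, z, hz, rfl⟩
    obtain ⟨v, rfl⟩ := Ideal.mem_span_singleton'.1 hz
    exact ⟨v, by simpa using hk⟩
  · rintro ⟨v, hv⟩
    exact ⟨_, hv, v * y, Ideal.mem_span_singleton'.2 ⟨v, rfl⟩, by ring⟩

lemma NZ.sup_pow {x y : R} {K : Ideal R} (hy : NZ y K)
    (hx : NZ x (K ⊔ Ideal.span {y})) (n : ℕ) : NZ x (K ⊔ Ideal.span {y ^ n}) := by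
  induction n with
  | zero => intro r hr; simp
  | succ m ih =>
    intro u hu
    obtain ⟨v, hv⟩ := mem_sup_span.1 hu
    have h1 : u * x ∈ K ⊔ Ideal.span {y ^ m} := by
      refine mem_sup_span.2 ⟨v * y, ?_⟩
      convert hv using 1; ring
    obtain ⟨w, hw⟩ := mem_sup_span.1 (ih _ h1)
    have h2 : (w * x - v * y) * y ^ m ∈ K := by
      have := K.sub_mem hv (K.mul_mem_right x hw)
      convert this using 1; ring
    have h3 := hy.pow m _ h2
    obtain ⟨z, hz⟩ := mem_sup_span.1 (hx w (mem_sup_span.2 ⟨v, h3⟩))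
    refine mem_sup_span.2 ⟨z, ?_⟩
    have := K.add_mem hw (K.mul_mem_right (y ^ m) hz)
    convert this using 1; ring

/-- The ideal generated by powers `x j ^ n j`, `j ∈ T`, and by `x j`, `j ∈ U`. -/
def II (x : Fin p → R) (n : Fin p → ℕ) (T : Finset (Fin p)) (U : Set (Fin p)) : Ideal R :=
  Ideal.span ((fun j => x j ^ n j) '' (T : Set (Fin p))) ⊔ Ideal.span (x '' U)

lemma II_insert (x : Fin p → R) (n : Fin p → ℕ) (T : Finset (Fin p)) (U : Set (Fin p))
    (j : Fin p) : II x n (insert j T) U = II x n T U ⊔ Ideal.span {x j ^ n j} := by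
  unfold II
  rw [Finset.coe_insert, Set.image_insert_eq, Ideal.span_insert]
  ac_rfl

lemma II_insert_right (x : Fin p → R) (n : Fin p → ℕ) (T : Finset (Fin p)) (U : Set (Fin p))
    (j : Fin p) : II x n T (insert j U) = II x n T U ⊔ Ideal.span {x j} := by
  unfold II
  rw [Set.image_insert_eq, Ideal.span_insert]
  ac_rfl

lemma nz_II (x : Fin p → R) (H : ∀ (U : Set (Fin p)) (i), i ∉ U → NZ (x i) (Ideal.span (x '' U)))
    (n : Fin p → ℕ) (T : Finset (Fin p)) :
    ∀ (U : Set (Fin p)) (_ : ∀ j ∈ T, j ∉ U) (i) (_ : i ∉ T) (_ : i ∉ U),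
      NZ (x i) (II x n T U) := by
  induction T using Finset.induction_on with
  | empty => intro U _ i _ hi; simpa [II] using H U i hi
  | insert j T hj ih =>
    intro U hd i hiT hiU
    rw [Finset.mem_insert, not_or] at hiT
    rw [II_insert]
    apply NZ.sup_pow
    · exact ih U (fun k hk => hd k (Finset.mem_insert_of_mem hk)) j hj
        (hd j (Finset.mem_insert_self _ _))
    · rw [← II_insert_right]
      refine ih _ (fun k hk => ?_) i hiT.2 ?_
      · rw [Set.mem_insert_iff, not_or]
        exact ⟨fun h => hj (h ▸ hk), hd k (Finset.mem_insert_of_mem hk)⟩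
      · rw [Set.mem_insert_iff, not_or]
        exact ⟨hiT.1, hiU⟩

lemma key_aux (x : Fin p → R)
    (H : ∀ (U : Set (Fin p)) (i), i ∉ U → NZ (x i) (Ideal.span (x '' U)))
    (a : Fin p → ℕ) (T : Finset (Fin p)) :
    ∀ (U : Set (Fin p)) (_ : ∀ j ∈ T, j ∉ U) (c : R),
      c * ∏ i ∈ T, x i ^ a i ∈ II x (fun i => a i + 1) T U → c ∈ Ideal.span (Set.range x) := by
  induction T using Finset.induction_on with
  | empty =>
    intro U _ c hc
    have : c ∈ Ideal.span (x '' U) := by simpa [II] using hc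
    exact Ideal.span_mono (Set.image_subset_range _ _) this
  | insert j T hj ih =>
    intro U hd c hc
    have hdT : ∀ k ∈ T, k ∉ U := fun k hk => hd k (Finset.mem_insert_of_mem hk)
    apply ih (insert j U)
    · intro k hk
      rw [Set.mem_insert_iff, not_or]
      exact ⟨fun h => hj (h ▸ hk), hdT k hk⟩
    · rw [II_insert_right]
      rw [II_insert, Finset.prod_insert hj] at hc
      obtain ⟨v, hv⟩ := mem_sup_span.1 hc
      refine mem_sup_span.2 ⟨v, ?_⟩
      apply (nz_II x H _ T U hdT j hj (hd j (Finset.mem_insert_self _ _))).pow (a j)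
      convert hv using 1
      ring

lemma key (x : Fin p → R)
    (H : ∀ (U : Set (Fin p)) (i), i ∉ U → NZ (x i) (Ideal.span (x '' U)))
    (a : Fin p → ℕ) (c : R) (hc : c ∉ Ideal.span (Set.range x)) (S : Set (Fin p → ℕ))
    (hS : c * mono x a ∈ Ideal.span (mono x '' S)) : ∃ b ∈ S, b ≤ a := by
  by_contra! hcon
  apply hc
  apply key_aux x H a Finset.univ ∅ (by simp) c
  refine (Ideal.span_le.2 ?_ : Ideal.span (mono x '' S) ≤ _) hS
  rintro _ ⟨b, hb, rfl⟩
  have h1 := hcon b hb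
  rw [Pi.le_def, not_forall] at h1
  obtain ⟨i, hi⟩ := h1
  refine Ideal.mem_of_dvd _ (?_ : x i ^ (a i + 1) ∣ _) ?_
  · exact (pow_dvd_pow _ (by omega)).trans
      (Finset.dvd_prod_of_mem (fun i => x i ^ b i) (Finset.mem_univ i))
  · exact Ideal.mem_sup_left (Ideal.subset_span ⟨i, by simp, rfl⟩)

lemma mono_dvd (x : Fin p → R) {a b : Fin p → ℕ} (h : a ≤ b) : mono x a ∣ mono x b :=
  Finset.prod_dvd_prod_of_dvd _ _ fun i _ => pow_dvd_pow _ (h i)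

lemma prime_of_grsop {x : Fin p → R} (hx : IsGRSOP x) (S : Set (Fin p)) :
    (Ideal.span (x '' S)).IsPrime :=
  (Ideal.Quotient.isDomain_iff_prime _).1 (hx.2 S).1

lemma nz_of_grsop {x : Fin p → R} (hx : IsGRSOP x) (U : Set (Fin p)) (i : Fin p) (hi : i ∉ U) :
    NZ (x i) (Ideal.span (x '' U)) := by
  intro r hr
  refine ((prime_of_grsop hx U).mem_or_mem hr).resolve_right fun hxi => ?_
  obtain _ | q := p
  · exact i.elim0
  have h := hx.1 (Equiv.swap i (Fin.last q))
  have hsub : Ideal.span (x '' U) ≤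
      Ideal.span ((x ∘ Equiv.swap i (Fin.last q)) '' {j | j < Fin.last q}) := by
    apply Ideal.span_mono
    rintro _ ⟨t, ht, rfl⟩
    refine ⟨Equiv.swap i (Fin.last q) t, ?_, by simp⟩
    refine lt_of_le_of_ne (Fin.le_last _) fun he => hi ?_
    have : t = i := by
      have := congrArg (Equiv.swap i (Fin.last q)) he
      simpa using this
    exact this ▸ ht
  have h2 := h.2 (Fin.last q) 1 (by simpa using hsub hxi)
  apply h.1
  rw [Ideal.eq_top_iff_one]
  exact Ideal.span_mono (Set.image_subset_range _ _) h2

lemma half {x : Fin p → R} (hx : IsGRSOP x) {f : R} {A B : Finset (Fin p → ℕ)}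
    (hA : IsMinMonRep x f A) (hB : IsMinMonRep x f B) : ∀ a ∈ A, ∃ b ∈ B, b ≤ a := by
  classical
  intro a ha
  obtain ⟨⟨h, r, hh, hr, e⟩, hmin⟩ := hA
  obtain ⟨⟨h', s, hh', hs, e'⟩, -⟩ := hB
  have hp : (Ideal.span (Set.range x)).IsPrime := by
    simpa using prime_of_grsop hx Set.univ
  have hc : h' * r a ∉ Ideal.span (Set.range x) := fun hm =>
    (hp.mem_or_mem hm).elim hh' (hr a ha)
  have hmem : h' * r a * mono x a ∈
      Ideal.span (mono x '' ((B : Set (Fin p → ℕ)) ∪ (A.erase a : Finset (Fin p → ℕ)))) := by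
    have : h' * r a * mono x a = h * ∑ b ∈ B, s b * mono x b
        - h' * ∑ b ∈ A.erase a, r b * mono x b := by
      rw [← Finset.add_sum_erase A _ ha] at e
      linear_combination h' * (-e) + h * e'
    rw [this]
    refine Ideal.sub_mem _ (Ideal.mul_mem_left _ _ (Ideal.sum_mem _ fun b hb => ?_))
      (Ideal.mul_mem_left _ _ (Ideal.sum_mem _ fun b hb => ?_))
    · exact Ideal.mul_mem_left _ _ (Ideal.subset_span ⟨b, Or.inl hb, rfl⟩)
    · exact Ideal.mul_mem_left _ _ (Ideal.subset_span ⟨b, Or.inr hb, rfl⟩)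
  obtain ⟨b, hb | hb, hba⟩ := key x (nz_of_grsop hx) a _ hc _ hmem
  · exact ⟨b, hb, hba⟩
  · have hb' := Finset.mem_erase.1 (Finset.mem_coe.1 hb)
    exact absurd (mono_dvd x hba) (hmin b hb'.2 a ha hb'.1)

lemma half_sub {x : Fin p → R} (hx : IsGRSOP x) {f : R} {A B : Finset (Fin p → ℕ)}
    (hA : IsMinMonRep x f A) (hB : IsMinMonRep x f B) : A ⊆ B := by
  intro a ha
  obtain ⟨b, hb, hba⟩ := half hx hA hB a ha
  obtain ⟨a', ha', hab⟩ := half hx hB hA b hb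
  have h1 : a' = a := by
    by_contra hne
    exact hA.2 a' ha' a ha hne (mono_dvd x (hab.trans hba))
  subst h1
  rwa [le_antisymm hab hba]

/-- uniqueness of the minimal monomial representation. -/
theorem minimal_monomial_representation_unique {R : Type*} [CommRing R] {p : ℕ}
    (x : Fin p → R) (hR : IsRegularDomain R) (hx : IsGRSOP x) (f : R)
    (A B : Finset (Fin p → ℕ)) (hA : IsMinMonRep x f A) (hB : IsMinMonRep x f B) :
    A = B :=
  Finset.Subset.antisymm (half_sub hx hA hB) (half_sub hx hB hA)

end NND
end
end

section
/- Let R be a regular domain with a generalized regular system of parameters x = x_1,…,x_p. If I = (x^{a_1},…,x^{a_s}) is a monomial ideal in R with respect to x, then Γ_x(I) = NP(I), i.e., the Newton polyhedron of I as defined via supports coincides with the polyhedron {a ∈ ℝ_{≥0}^p : a ≥ Σ_{i=1}^s c_i a_i for some c_i ∈ ℝ_{≥0} with Σ c_i = 1}. -/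
open Ideal Set Pointwise

noncomputable section

namespace NND

variable {R : Type*} [CommRing R] {p : ℕ}

/-- every member is a nonzerodivisor modulo any set of other members -/
def GReg (y : Fin p → R) : Prop :=
  ∀ (T : Set (Fin p)) (i : Fin p), i ∉ T → ∀ r : R, y i * r ∈ Ideal.span (y '' T) →
    r ∈ Ideal.span (y '' T)

lemma pow_nzd (J : Ideal R) (y : R) (h : ∀ r, y * r ∈ J → r ∈ J) (n : ℕ) :
    ∀ r, y ^ n * r ∈ J → r ∈ J := by
  induction n with
  | zero => intro r hr; simpa using hr
  | succ n ih =>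
    intro r hr
    apply h; apply ih
    rw [← mul_assoc, ← pow_succ]; exact hr

lemma nzd_mod_pow (J : Ideal R) (y z : R) (hy : ∀ r, y * r ∈ J → r ∈ J)
    (hz : ∀ r, z * r ∈ J ⊔ Ideal.span {y} → r ∈ J ⊔ Ideal.span {y}) (n : ℕ) :
    ∀ r, z * r ∈ J ⊔ Ideal.span {y ^ n} → r ∈ J ⊔ Ideal.span {y ^ n} := by
  induction n with
  | zero => intro r _; simp
  | succ n ih =>
    intro r hr
    have h1 : J ⊔ Ideal.span {y ^ (n+1)} ≤ J ⊔ Ideal.span {y} := by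
      apply sup_le_sup_left
      rw [Ideal.span_singleton_le_span_singleton]
      exact dvd_pow_self y (by omega)
    have h2 := hz r (h1 hr)
    rw [Submodule.mem_sup] at h2 hr
    obtain ⟨j, hj, w, hw, rfl⟩ := h2
    obtain ⟨r', rfl⟩ := Ideal.mem_span_singleton'.1 hw
    obtain ⟨j2, hj2, w2, hw2, h3⟩ := hr
    obtain ⟨t, rfl⟩ := Ideal.mem_span_singleton'.1 hw2
    have h4 : z * r' - t * y ^ n ∈ J := by
      apply hy
      have : y * (z * r' - t * y ^ n) = j2 - z * j := by linear_combination -h3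
      rw [this]
      exact J.sub_mem hj2 (J.mul_mem_left _ hj)
    have h5 : z * r' ∈ J ⊔ Ideal.span {y ^ n} := by
      rw [Submodule.mem_sup]
      exact ⟨_, h4, t * y ^ n, Ideal.mem_span_singleton'.2 ⟨t, rfl⟩, by ring⟩
    have h6 := ih r' h5
    rw [Submodule.mem_sup] at h6 ⊢
    obtain ⟨j3, hj3, w3, hw3, h7⟩ := h6
    obtain ⟨t3, rfl⟩ := Ideal.mem_span_singleton'.1 hw3
    refine ⟨j + y * j3, J.add_mem hj (J.mul_mem_left _ hj3), t3 * y ^ (n+1),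
      Ideal.mem_span_singleton'.2 ⟨t3, rfl⟩, ?_⟩
    rw [← h7]; ring

lemma image_update (y : Fin p → R) (j : Fin p) (v : R) (T : Set (Fin p)) (hj : j ∉ T) :
    Function.update y j v '' T = y '' T := by
  apply Set.image_congr
  intro k hk
  rw [Function.update_of_ne]
  rintro rfl; exact hj hk

lemma span_update (y : Fin p → R) (j : Fin p) (v : R) (T : Set (Fin p)) (hj : j ∈ T) :
    Ideal.span (Function.update y j v '' T) = Ideal.span (y '' (T \ {j})) ⊔ Ideal.span {v} := by
  rw [← image_update y j v (T \ {j}) (by simp), ← Ideal.span_union]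
  congr 1
  conv_lhs => rw [← Set.sdiff_union_of_subset (Set.singleton_subset_iff.2 hj), Set.image_union]
  simp

lemma GReg.update {y : Fin p → R} (hy : GReg y) (j : Fin p) (n : ℕ) :
    GReg (Function.update y j (y j ^ n)) := by
  intro T i hi r hr
  by_cases hj : j ∈ T
  · have hij : i ≠ j := by rintro rfl; exact hi hj
    rw [span_update _ _ _ _ hj, Function.update_of_ne hij] at hr
    rw [span_update _ _ _ _ hj]
    refine nzd_mod_pow _ (y j) (y i) (hy _ _ (by simp)) ?_ n r hr
    have := span_update y j (y j) T hj
    rw [Function.update_eq_self] at this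
    rw [← this]
    exact hy T i hi
  · rw [image_update _ _ _ _ hj] at hr ⊢
    by_cases hij : i = j
    · subst hij
      rw [Function.update_self] at hr
      exact pow_nzd _ _ (hy T i hi) n r hr
    · rw [Function.update_of_ne hij] at hr
      exact hy T i hi r hr

lemma GReg.pow {y : Fin p → R} (hy : GReg y) (e : Fin p → ℕ) (F : Finset (Fin p)) :
    GReg (fun j => y j ^ (if j ∈ F then e j else 1)) := by
  induction F using Finset.induction_on with
  | empty => simpa using hy
  | insert k F hk ih =>
    have := ih.update k (e k)
    convert this using 1
    funext j
    by_cases hj : j = k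
    · subst hj; simp [hk]
    · rw [Function.update_of_ne hj]; simp [hj]

lemma peel {y : Fin p → R} (hy : GReg y) (a : Fin p → ℕ) (F : Finset (Fin p)) :
    ∀ r : R, r * ∏ i ∈ F, y i ^ a i ∈
      Ideal.span (Set.range fun j => y j ^ (if j ∈ F then a j + 1 else 1)) →
      r ∈ Ideal.span (Set.range y) := by
  induction F using Finset.induction_on with
  | empty => intro r hr; simpa using hr
  | insert k F hk ih =>
    intro r hr
    apply ih
    rw [Finset.prod_insert hk] at hr
    set z : Fin p → R := fun j => y j ^ (if j ∈ F then a j + 1 else 1) with hz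
    have hG : GReg z := hy.pow (fun j => a j + 1) F
    have hzk : z k = y k := by simp [hz, hk]
    have e1 : (fun j => y j ^ (if j ∈ insert k F then a j + 1 else 1)) =
        Function.update z k (y k ^ (a k + 1)) := by
      funext j
      by_cases hj : j = k
      · subst hj; simp
      · rw [Function.update_of_ne hj]; simp [hj, hz]
    rw [e1, ← Set.image_univ, span_update _ _ _ _ (Set.mem_univ k), Submodule.mem_sup] at hr
    obtain ⟨j, hj, w, hw, h3⟩ := hr
    obtain ⟨t, rfl⟩ := Ideal.mem_span_singleton'.1 hw
    have h4 : r * ∏ i ∈ F, y i ^ a i - t * y k ∈ Ideal.span (z '' (Set.univ \ {k})) := by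
      refine pow_nzd _ (y k) ?_ (a k) _ ?_
      · rw [← hzk]; exact hG _ _ (by simp)
      · convert hj using 1
        linear_combination -h3
    have h5 := span_update z k (z k) Set.univ (Set.mem_univ k)
    rw [Function.update_eq_self, Set.image_univ] at h5
    rw [h5, Submodule.mem_sup]
    exact ⟨_, h4, t * y k, Ideal.mem_span_singleton'.2 ⟨t, by rw [hzk]⟩, by ring⟩

lemma IsGRSOP.greg {x : Fin p → R} (hx : IsGRSOP x) : GReg x := by
  intro T i hi r hr
  have hd : IsDomain (R ⧸ Ideal.span (x '' T)) := (hx.2 T).1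
  have hp : (Ideal.span (x '' T)).IsPrime := (Ideal.Quotient.isDomain_iff_prime _).1 hd
  refine (hp.mem_or_mem hr).resolve_left ?_
  intro hmem
  cases p with
  | zero => exact i.elim0
  | succ n =>
    obtain ⟨h1, h2⟩ := hx.1 (Equiv.swap i (Fin.last n))
    have h3 := h2 (Fin.last n) 1
    have hsub : Ideal.span (x '' T) ≤
        Ideal.span ((x ∘ Equiv.swap i (Fin.last n)) '' {j | j < Fin.last n}) := by
      apply Ideal.span_mono
      rintro _ ⟨t, ht, rfl⟩
      refine ⟨Equiv.swap i (Fin.last n) t, ?_, by simp⟩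
      have hti : t ≠ i := by rintro rfl; exact hi ht
      refine lt_of_le_of_ne (Fin.le_last _) ?_
      intro h
      apply hti
      have := congrArg (Equiv.swap i (Fin.last n)) h
      simpa using this
    have h4 := h3 (by simpa using hsub hmem)
    apply h1
    rw [Ideal.eq_top_iff_one]
    exact Ideal.span_mono (Set.image_subset_range _ _) h4

lemma core {x : Fin p → R} (hx : GReg x) (B : Set (Fin p → ℕ)) (a : Fin p → ℕ) (r : R)
    (hr : r ∉ Ideal.span (Set.range x)) (h : r * mono x a ∈ Ideal.span (mono x '' B)) :
    ∃ b ∈ B, b ≤ a := by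
  by_contra! hB
  apply hr
  apply peel hx a Finset.univ r
  refine (Ideal.span_le.2 ?_) h
  rintro _ ⟨b, hb, rfl⟩
  have := hB b hb
  rw [Pi.le_def] at this
  push Not at this
  obtain ⟨i, hi⟩ := this
  have hd : x i ^ (a i + 1) ∣ mono x b :=
    (pow_dvd_pow (x i) hi).trans (Finset.dvd_prod_of_mem (fun i => x i ^ b i) (Finset.mem_univ i))
  refine Ideal.mem_of_dvd _ hd (Ideal.subset_span ⟨i, by simp⟩)

lemma supp_le {x : Fin p → R} (hx : GReg x) (B : Set (Fin p → ℕ)) (f : R)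
    (hf : f ∈ Ideal.span (mono x '' B)) (a : Fin p → ℕ) (ha : a ∈ supp x f) :
    ∃ b ∈ B, b ≤ a := by
  classical
  unfold supp at ha
  split_ifs at ha with h
  swap
  · exact ha.elim
  obtain ⟨⟨h', r, hh, hr, he⟩, hmin⟩ := h.choose_spec
  generalize h.choose = A at *
  have haA : a ∈ A := ha
  have key : r a * mono x a ∈ Ideal.span (mono x '' (B ∪ (A.erase a : Finset _))) := by
    rw [← Finset.add_sum_erase _ _ haA] at he
    have : r a * mono x a = h' * f - ∑ c ∈ A.erase a, r c * mono x c := by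
      linear_combination -he
    rw [this]
    refine Ideal.sub_mem _ (Ideal.mul_mem_left _ _ ?_) (Ideal.sum_mem _ fun c hc => ?_)
    · exact Ideal.span_mono (Set.image_mono Set.subset_union_left) hf
    · exact Ideal.mul_mem_left _ _ (Ideal.subset_span ⟨c, Or.inr hc, rfl⟩)
  obtain ⟨b, hb, hba⟩ := core hx _ a _ (hr a haA) key
  rcases hb with hb | hb
  · exact ⟨b, hb, hba⟩
  · have hb' := Finset.mem_erase.1 (Finset.mem_coe.1 hb)
    exact (hmin b hb'.2 a haA hb'.1 (mono_dvd x hba)).elim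

lemma mem_supp_mono {x : Fin p → R} (hx : GReg x) (h1 : (1 : R) ∉ Ideal.span (Set.range x))
    (b : Fin p → ℕ) : b ∈ supp x (mono x b) := by
  have hex : ∃ A : Finset (Fin p → ℕ), IsMinMonRep x (mono x b) A := by
    refine ⟨{b}, ⟨1, fun _ => 1, h1, fun _ _ => h1, by simp⟩, ?_⟩
    intro a ha c hc hac
    rw [Finset.mem_singleton] at ha hc
    exact (hac (ha.trans hc.symm)).elim
  have hle := supp_le hx {b} (mono x b) (Ideal.subset_span ⟨b, rfl, rfl⟩)
  have hs : supp x (mono x b) = ↑hex.choose := by unfold supp; rw [dif_pos hex]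
  obtain ⟨⟨h', r, hh, hr, he⟩, hmin⟩ := hex.choose_spec
  rw [hs] at hle ⊢
  obtain ⟨a, ha, hab⟩ := core hx (hex.choose : Set (Fin p → ℕ)) b h' hh (by
    rw [he]
    exact Ideal.sum_mem _ fun c hc => Ideal.mul_mem_left _ _ (Ideal.subset_span ⟨c, hc, rfl⟩))
  obtain ⟨b', hb', hba⟩ := hle a ha
  rw [Set.mem_singleton_iff] at hb'
  subst hb'
  have hab' := le_antisymm hba hab
  exact Eq.mpr (congrArg (· ∈ (hex.choose : Set (Fin p → ℕ))) hab') ha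

lemma box_mem (a : Fin p → ℕ) (v : Fin p → ℝ) (hv : ∀ j, (a j : ℝ) ≤ v j) :
    v ∈ convexHull ℝ (toR '' {b : Fin p → ℕ | a ≤ b}) := by
  have hsub : Set.pi Set.univ (fun j => {((a j : ℕ) : ℝ), ((a j + ⌈v j⌉₊ : ℕ) : ℝ)}) ⊆
      toR '' {b : Fin p → ℕ | a ≤ b} := by
    intro w hw
    have : ∀ j, ∃ n : ℕ, a j ≤ n ∧ (n : ℝ) = w j := by
      intro j
      rcases hw j (Set.mem_univ j) with h | h
      · exact ⟨_, le_rfl, h.symm⟩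
      · exact ⟨_, Nat.le_add_right _ _, (Set.mem_singleton_iff.1 h).symm⟩
    choose b hb1 hb2 using this
    exact ⟨b, hb1, funext hb2⟩
  refine convexHull_mono hsub ?_
  rw [convexHull_pi]
  intro j _
  beta_reduce
  rw [convexHull_pair, segment_eq_Icc (by push_cast; simp)]
  refine ⟨hv j, ?_⟩
  push_cast
  have := Nat.le_ceil (v j)
  have h0 : (0 : ℝ) ≤ a j := Nat.cast_nonneg _
  linarith

/-- for monomial ideals, `Γ_x(I) = NP(I)`. -/
theorem newtonPolyhedron_monomial_ideal {R : Type*} [CommRing R] {p : ℕ}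
    (x : Fin p → R) (hR : IsRegularDomain R) (hx : IsGRSOP x)
    (s : ℕ) (a : Fin s → Fin p → ℕ) (I : Ideal R)
    (hI : I = Ideal.span (Set.range fun i => mono x (a i))) :
    ΓI x I = {v : Fin p → ℝ | (∀ j, 0 ≤ v j) ∧
      ∃ c : Fin s → ℝ, (∀ i, 0 ≤ c i) ∧ (∑ i, c i) = 1 ∧
        ∀ j, (∑ i, c i * (a i j : ℝ)) ≤ v j} := by
  have hG := hx.greg
  have h1 : (1 : R) ∉ Ideal.span (Set.range x) := by
    have := (hx.1 (Equiv.refl _)).1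
    rw [Ne, Ideal.eq_top_iff_one] at this
    simpa using this
  have hI' : I = Ideal.span (mono x '' Set.range a) := by
    rw [hI, ← Set.range_comp]; rfl
  apply Set.Subset.antisymm
  · refine convexHull_min ?_ ?_
    · rintro _ ⟨b, hb, rfl⟩
      simp only [Set.mem_iUnion] at hb
      obtain ⟨f, hf, hb⟩ := hb
      rw [hI'] at hf
      obtain ⟨_, ⟨i, rfl⟩, hib⟩ := supp_le hG _ f hf b hb
      refine ⟨fun j => Nat.cast_nonneg _, fun k => if k = i then 1 else 0, ?_, ?_, ?_⟩
      · intro k; beta_reduce; split_ifs <;> norm_num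
      · simp
      · intro j
        simpa [toR] using hib j
    · rintro u ⟨hu, c, hc, hc1, hcu⟩ v ⟨hv, d, hd, hd1, hdv⟩ s t hs ht hst
      refine ⟨fun j => ?_, fun i => s * c i + t * d i, fun i => ?_, ?_, fun j => ?_⟩
      · have := mul_nonneg hs (hu j)
        have := mul_nonneg ht (hv j)
        simp only [Pi.add_apply, Pi.smul_apply, smul_eq_mul]; linarith
      · have := mul_nonneg hs (hc i)
        have := mul_nonneg ht (hd i)
        linarith
      · rw [Finset.sum_add_distrib, ← Finset.mul_sum, ← Finset.mul_sum, hc1, hd1]; linarith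
      · have e : ∑ i, (s * c i + t * d i) * (a i j : ℝ) =
            s * ∑ i, c i * (a i j : ℝ) + t * ∑ i, d i * (a i j : ℝ) := by
          rw [Finset.mul_sum, Finset.mul_sum, ← Finset.sum_add_distrib]
          exact Finset.sum_congr rfl fun i _ => by ring
        rw [e]
        have := mul_le_mul_of_nonneg_left (hcu j) hs
        have := mul_le_mul_of_nonneg_left (hdv j) ht
        simp only [Pi.add_apply, Pi.smul_apply, smul_eq_mul]; linarith
  · rintro v ⟨hv, c, hc, hc1, hcv⟩
    have hmem : ∀ i, (fun j => (a i j : ℝ) + (v j - ∑ k, c k * (a k j : ℝ))) ∈ ΓI x I := by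
      intro i
      refine convexHull_mono (Set.image_mono ?_) (box_mem (a i) _ fun j => ?_)
      · intro b hb
        simp only [Set.mem_iUnion]
        refine ⟨mono x b, ?_, mem_supp_mono hG h1 b⟩
        rw [hI']
        exact Ideal.mem_of_dvd _ (mono_dvd x hb) (Ideal.subset_span ⟨a i, ⟨i, rfl⟩, rfl⟩)
      · have := hcv j
        linarith
    have hconv : Convex ℝ (ΓI x I) := convex_convexHull ℝ _
    have := hconv.sum_mem (t := Finset.univ) (fun i _ => hc i) hc1 (fun i _ => hmem i)
    convert this using 1
    funext j
    simp only [Finset.sum_apply, Pi.smul_apply, smul_eq_mul, mul_add, Finset.sum_add_distrib]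
    rw [← Finset.sum_mul, hc1]
    ring


end NND
end
end
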